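/- arXiv:1309.6603 — 2 statements merged into one kernel-verified Lean document; each statement's English description precedes it below -/
import Mathlib

section
/- There exists an integer N such that for all integers m > N and all integers k with 2 ≤ k ≤ 8m³, the following holds: for a uniformly random assignment of m balls into k bins, the probability that the maximum load exceeds (m/k)·(1 + k^{3/4}) is at most 1/(2k). -/
/-!
This is a Chernoff bound followed by a union bound over the bins. Put `δ = k^{3/4}`. For a fixed
bin `j`, the sum of `(1 + δ) ^ load` over all assignments factors over the balls and equals
`(k + δ) ^ m ≤ k ^ m * exp (m δ / k)` (`sum_pow_load`). Markov's inequality at the threshold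
`(m/k)(1 + δ)`, summed over the `k` bins, bounds the failure probability by
`k * exp ((m/k) (δ - (1 + δ) log (1 + δ)))` (`card_bad_le`). The inequality
`2δ/(δ+2) ≤ log (1+δ)` and `δ ≥ 1` turn the exponent into at most `-(m/k) δ / 3`
(`chernoff_exponent_le`). Since `k ≤ 8 m³`, one has `(m/k) δ = m / k^{1/4} ≥ m^{1/4} / 2`, and
`exp (-m^{1/4} / 6)` is eventually below `1 / (128 m⁶) ≤ 1 / (2 k²)`.
-/

/-- The maximum load of an assignment `f` of balls (elements of `Fin m`) into bins
(elements of `Fin k`): the largest number of balls landing in a single bin. -/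
def maxLoad {m k : ℕ} (f : Fin m → Fin k) : ℕ :=
  Finset.univ.sup fun j : Fin k => (Finset.univ.filter fun i : Fin m => f i = j).card

/-- The generating function of the load of bin `j`, summed over all assignments: every ball
contributes a factor `a` for bin `j` and `1` for each of the other `k - 1` bins. -/
lemma sum_pow_load (m k : ℕ) (a : ℝ) (j : Fin k) :
    ∑ f : Fin m → Fin k, a ^ (Finset.univ.filter fun i : Fin m => f i = j).card
      = ((k : ℝ) + (a - 1)) ^ m := by
  have h1 : ∀ f : Fin m → Fin k, a ^ (Finset.univ.filter fun i : Fin m => f i = j).card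
      = ∏ i : Fin m, (if f i = j then a else 1) := by
    intro f
    rw [Finset.prod_ite]
    simp
  have h2 : ∑ x : Fin k, (if x = j then a else 1) = (k : ℝ) + (a - 1) := by
    have h3 : ∀ x : Fin k, (if x = j then a else 1) = 1 + (if x = j then a - 1 else 0) := by
      intro x
      split_ifs <;> ring
    simp [h3, Finset.sum_add_distrib]
  simp_rw [h1]
  rw [← Fintype.prod_sum (fun (_ : Fin m) (x : Fin k) => if x = j then a else (1 : ℝ))]
  simp [h2]

/-- Markov's inequality for `(1 + δ) ^ load` together with the union bound over the bins. -/
lemma card_bad_le (m k : ℕ) (hk : 0 < k) (δ T : ℝ) (hδ : 0 < δ) :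
    ((Finset.univ.filter fun f : Fin m → Fin k => T < (maxLoad f : ℝ)).card : ℝ)
      / (k : ℝ) ^ m ≤ k * Real.exp (m / k * δ - T * Real.log (1 + δ)) := by
  have hk' : (0 : ℝ) < k := by exact_mod_cast hk
  have ha : (0 : ℝ) < 1 + δ := by linarith
  have key : ((Finset.univ.filter fun f : Fin m → Fin k => T < (maxLoad f : ℝ)).card : ℝ)
      * Real.exp (T * Real.log (1 + δ)) ≤ k * ((k : ℝ) + δ) ^ m := by
    calc _ = ∑ f ∈ Finset.univ.filter (fun f : Fin m → Fin k => T < (maxLoad f : ℝ)),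
            Real.exp (T * Real.log (1 + δ)) := by simp
      _ ≤ ∑ f ∈ Finset.univ.filter (fun f : Fin m → Fin k => T < (maxLoad f : ℝ)),
            ∑ j : Fin k, (1 + δ) ^ (Finset.univ.filter fun i : Fin m => f i = j).card := by
          refine Finset.sum_le_sum fun f hf => ?_
          have hf' : T < (maxLoad f : ℝ) := by simpa using hf
          have : Nonempty (Fin k) := ⟨⟨0, hk⟩⟩
          obtain ⟨j, -, hj⟩ := Finset.exists_mem_eq_sup (Finset.univ : Finset (Fin k))
            Finset.univ_nonempty
            (fun j : Fin k => (Finset.univ.filter fun i : Fin m => f i = j).card)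
          have hj' : maxLoad f = (Finset.univ.filter fun i : Fin m => f i = j).card := hj
          rw [hj'] at hf'
          refine le_trans ?_ (Finset.single_le_sum
            (f := fun j : Fin k => (1 + δ) ^ (Finset.univ.filter fun i : Fin m => f i = j).card)
            (fun _ _ => by positivity) (Finset.mem_univ j))
          have hlog : 0 ≤ Real.log (1 + δ) := Real.log_nonneg (by linarith)
          show _ ≤ (1 + δ) ^ (Finset.univ.filter fun i : Fin m => f i = j).card
          rw [← Real.exp_log (pow_pos ha _), Real.log_pow]
          exact Real.exp_le_exp.mpr (mul_le_mul_of_nonneg_right hf'.le hlog)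
      _ ≤ ∑ f : Fin m → Fin k,
            ∑ j : Fin k, (1 + δ) ^ (Finset.univ.filter fun i : Fin m => f i = j).card :=
          Finset.sum_le_sum_of_subset_of_nonneg (Finset.filter_subset _ _)
            fun _ _ _ => Finset.sum_nonneg fun _ _ => by positivity
      _ = k * ((k : ℝ) + δ) ^ m := by
          rw [Finset.sum_comm]
          simp_rw [sum_pow_load]
          simp
  have hpow : ((k : ℝ) + δ) ^ m ≤ (k : ℝ) ^ m * Real.exp (m / k * δ) := by
    have h : (k : ℝ) + δ ≤ k * Real.exp (δ / k) := by
      have := Real.add_one_le_exp (δ / k)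
      calc (k : ℝ) + δ = k * (δ / k + 1) := by field_simp; ring
        _ ≤ _ := by gcongr
    calc _ ≤ (k * Real.exp (δ / k)) ^ m := by gcongr
      _ = _ := by
        rw [mul_pow, ← Real.exp_nat_mul]
        congr 2
        ring
  rw [Real.exp_sub, div_le_iff₀ (by positivity), ← mul_div_assoc, div_mul_eq_mul_div,
    le_div_iff₀ (Real.exp_pos _)]
  calc _ ≤ k * ((k : ℝ) + δ) ^ m := key
    _ ≤ k * ((k : ℝ) ^ m * Real.exp (m / k * δ)) := by gcongr
    _ = _ := by ring

lemma chernoff_exponent_le (δ : ℝ) (hδ : 1 ≤ δ) :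
    δ - (1 + δ) * Real.log (1 + δ) ≤ -(δ / 3) := by
  have h := Real.le_log_one_add_of_nonneg (show 0 ≤ δ by linarith)
  have h2 : (1 + δ) * (2 * δ / (δ + 2)) ≤ (1 + δ) * Real.log (1 + δ) := by gcongr
  have h3 : δ + δ / 3 ≤ (1 + δ) * (2 * δ / (δ + 2)) := by
    rw [← mul_div_assoc, le_div_iff₀ (by linarith)]
    nlinarith
  linarith

/-- There is an integer `N` such that for all `m > N` and all `k` with
`2 ≤ k ≤ 8m³`, a uniformly random assignment of `m` balls into `k` bins has
maximum load exceeding `(m/k)(1 + k^{3/4})` with probability at most `1/(2k)`. -/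
theorem stmt_8 :
    ∃ N : ℕ, ∀ m : ℕ, N < m → ∀ k : ℕ, 2 ≤ k → k ≤ 8 * m ^ 3 →
      ((Finset.univ.filter fun f : Fin m → Fin k =>
          ((m : ℝ) / k) * (1 + (k : ℝ) ^ ((3 : ℝ) / 4)) < (maxLoad f : ℝ)).card : ℝ)
        / (k : ℝ) ^ m ≤ 1 / (2 * (k : ℝ)) := by
  have htend : Filter.Tendsto (fun m : ℕ => (m : ℝ) ^ ((1 : ℝ) / 4) / 6)
      Filter.atTop Filter.atTop :=
    ((tendsto_rpow_atTop (by norm_num)).comp tendsto_natCast_atTop_atTop).atTop_div_const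
      (by norm_num)
  have hev := ((Real.tendsto_exp_div_pow_atTop 24).comp htend).eventually_ge_atTop
    (128 * 6 ^ 24 : ℝ)
  obtain ⟨N, hN⟩ := Filter.eventually_atTop.mp hev
  refine ⟨N, fun m hm k hk hkm => ?_⟩
  have hlarge := hN m hm.le
  have hm0 : (0 : ℝ) < m := by exact_mod_cast (Nat.zero_le N).trans_lt hm
  have hk2 : (2 : ℝ) ≤ k := by exact_mod_cast hk
  have hk0 : (0 : ℝ) < k := by linarith
  have hkm' : (k : ℝ) ≤ 8 * (m : ℝ) ^ 3 := by exact_mod_cast hkm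
  -- Fourth roots `r` of `m` and `q` of `k` make all powers integral.
  obtain ⟨r, hr⟩ : ∃ r : ℝ, r = (m : ℝ) ^ ((1 : ℝ) / 4) := ⟨_, rfl⟩
  obtain ⟨q, hq⟩ : ∃ q : ℝ, q = (k : ℝ) ^ ((1 : ℝ) / 4) := ⟨_, rfl⟩
  have hr0 : 0 < r := hr ▸ Real.rpow_pos_of_pos hm0 _
  have hq0 : 0 < q := hq ▸ Real.rpow_pos_of_pos hk0 _
  have hr4 : (m : ℝ) = r ^ 4 := by
    rw [hr, ← Real.rpow_natCast, ← Real.rpow_mul hm0.le]; norm_num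
  have hq4 : (k : ℝ) = q ^ 4 := by
    rw [hq, ← Real.rpow_natCast, ← Real.rpow_mul hk0.le]; norm_num
  have hδ : (k : ℝ) ^ ((3 : ℝ) / 4) = q ^ 3 := by
    rw [hq, ← Real.rpow_natCast, ← Real.rpow_mul hk0.le]; norm_num
  have hq1 : 1 ≤ q := hq ▸ Real.one_le_rpow (by linarith) (by norm_num)
  have hqr : q ≤ 2 * r ^ 3 := by
    refine le_of_pow_le_pow_left₀ (n := 4) (by norm_num) (by positivity) ?_
    rw [← hq4]
    calc (k : ℝ) ≤ 8 * (m : ℝ) ^ 3 := hkm'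
      _ ≤ 16 * (m : ℝ) ^ 3 := by gcongr; norm_num
      _ = (2 * r ^ 3) ^ 4 := by rw [hr4]; ring
  rw [hδ]
  refine (card_bad_le m k (by omega) (q ^ 3) _ (by positivity)).trans ?_
  have hexp : (m : ℝ) / k * q ^ 3 - m / k * (1 + q ^ 3) * Real.log (1 + q ^ 3) ≤ -(r / 6) := by
    have h1 := chernoff_exponent_le (q ^ 3) (one_le_pow₀ hq1)
    have h2 : r / 2 ≤ (m : ℝ) / k * q ^ 3 := by
      have : (m : ℝ) / k * q ^ 3 = r ^ 4 / q := by
        rw [hr4, hq4]; field_simp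
      rw [this, div_le_div_iff₀ (by norm_num) hq0]
      nlinarith [mul_le_mul_of_nonneg_left hqr hr0.le]
    have h3 := mul_le_mul_of_nonneg_left h1 (show (0 : ℝ) ≤ m / k by positivity)
    linarith
  have hbig : 2 * (k : ℝ) ^ 2 ≤ Real.exp (r / 6) := by
    have h1 : (128 * 6 ^ 24 : ℝ) ≤ Real.exp (r / 6) / (r / 6) ^ 24 := by
      rw [hr]; exact hlarge
    rw [le_div_iff₀ (by positivity)] at h1
    calc 2 * (k : ℝ) ^ 2 ≤ 2 * (8 * (m : ℝ) ^ 3) ^ 2 := by gcongr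
      _ = 128 * 6 ^ 24 * (r / 6) ^ 24 := by rw [hr4]; ring
      _ ≤ _ := h1
  calc _ ≤ (k : ℝ) * Real.exp (-(r / 6)) := by gcongr
    _ ≤ 1 / (2 * (k : ℝ)) := by
      rw [Real.exp_neg, ← div_eq_mul_inv, div_le_div_iff₀ (Real.exp_pos _) (by positivity)]
      nlinarith
end

section
/- There exists an integer N₀ such that for all positive integers u, x and m, setting k = max(16x⁴, u³, 8N₀³), the following holds: for a uniformly random assignment of m balls into k bins, the probability that the maximum load exceeds max(1, m/x) is at most 1/(2u). That is, with probability at least 1 − 1/(2u), after the assignment every bin contains either at most one ball or at most m/x balls. -/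
/-- The assignments that send all of `S` to the bin `j` form a fraction `k ^ (-|S|)` of the total. -/
lemma card_const_on {m k : ℕ} (S : Finset (Fin m)) (j : Fin k) :
    (Finset.univ.filter fun f : Fin m → Fin k => ∀ i ∈ S, f i = j).card * k ^ S.card = k ^ m := by
  have h : (Finset.univ.filter fun f : Fin m → Fin k => ∀ i ∈ S, f i = j)
      = Fintype.piFinset (fun i => if i ∈ S then {j} else Finset.univ) := by
    ext f
    simp only [Finset.mem_filter, Finset.mem_univ, true_and, Fintype.mem_piFinset]
    refine forall_congr' fun i => ?_
    by_cases hi : i ∈ S <;> simp [hi]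
  have h2 : k ^ S.card = ∏ i : Fin m, if i ∈ S then k else 1 := by
    rw [Finset.prod_ite_mem]; simp
  rw [h, Fintype.card_piFinset, h2, ← Finset.prod_mul_distrib]
  have h3 : ∀ i : Fin m, (if i ∈ S then ({j} : Finset (Fin k)) else Finset.univ).card
      * (if i ∈ S then k else 1) = k := by
    intro i
    by_cases hi : i ∈ S <;> simp [hi]
  simp [h3]

/-- The union bound over bins and `t`-sets of balls, cleared of denominators. -/
lemma card_le_maxLoad (m k t : ℕ) (ht : 1 ≤ t) :
    (Finset.univ.filter fun f : Fin m → Fin k => t ≤ maxLoad f).card * k ^ t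
      ≤ k * m.choose t * k ^ m := by
  have hsub : (Finset.univ.filter fun f : Fin m → Fin k => t ≤ maxLoad f) ⊆
      ((Finset.univ : Finset (Fin k)) ×ˢ (Finset.univ : Finset (Fin m)).powersetCard t).biUnion
        (fun p => Finset.univ.filter fun f : Fin m → Fin k => ∀ i ∈ p.2, f i = p.1) := by
    intro f hf
    simp only [Finset.mem_filter, Finset.mem_univ, true_and] at hf
    have hpos : (⊥ : ℕ) < t := ht
    obtain ⟨j, -, hj⟩ := (Finset.le_sup_iff hpos).1 hf
    obtain ⟨S, hS, hc⟩ := Finset.exists_subset_card_eq hj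
    simp only [Finset.mem_biUnion, Finset.mem_product, Finset.mem_univ, true_and,
      Finset.mem_powersetCard, Finset.mem_filter, Prod.exists]
    exact ⟨j, S, ⟨Finset.subset_univ _, hc⟩, fun i hi => (Finset.mem_filter.1 (hS hi)).2⟩
  calc _ ≤ (∑ p ∈ (Finset.univ : Finset (Fin k)) ×ˢ (Finset.univ : Finset (Fin m)).powersetCard t,
          (Finset.univ.filter fun f : Fin m → Fin k => ∀ i ∈ p.2, f i = p.1).card) * k ^ t :=
        Nat.mul_le_mul_right _ ((Finset.card_le_card hsub).trans Finset.card_biUnion_le)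
    _ = ∑ p ∈ (Finset.univ : Finset (Fin k)) ×ˢ (Finset.univ : Finset (Fin m)).powersetCard t,
          k ^ m := by
        rw [Finset.sum_mul]
        refine Finset.sum_congr rfl fun p hp => ?_
        have hc := (Finset.mem_powersetCard.1 (Finset.mem_product.1 hp).2).2
        rw [← hc]
        exact card_const_on p.2 p.1
    _ = k * m.choose t * k ^ m := by simp

lemma choose_le_three_mul_pow (m x t : ℕ) (h : m ≤ t * x) : m.choose t ≤ (3 * x) ^ t := by
  have hfac : (0 : ℝ) < t.factorial := by positivity
  have h1 : (m.choose t : ℝ) ≤ (m : ℝ) ^ t / t.factorial := Nat.choose_le_pow_div t m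
  have h2 : (t : ℝ) ^ t / t.factorial ≤ 3 ^ t := by
    refine (Real.pow_div_factorial_le_exp (t : ℝ) (by positivity) t).trans ?_
    rw [← Real.exp_one_pow]
    exact pow_le_pow_left₀ (Real.exp_pos _).le (by linarith [Real.exp_one_lt_d9]) t
  have h3 : (m : ℝ) ≤ t * x := by exact_mod_cast h
  have h4 : (m.choose t : ℝ) ≤ (3 * x) ^ t := by
    calc (m.choose t : ℝ) ≤ (m : ℝ) ^ t / t.factorial := h1
      _ ≤ (t * x : ℝ) ^ t / t.factorial := by gcongr
      _ = (t : ℝ) ^ t / t.factorial * (x : ℝ) ^ t := by rw [mul_pow]; ring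
      _ ≤ 3 ^ t * (x : ℝ) ^ t := by gcongr
      _ = _ := (mul_pow _ _ _).symm
  exact_mod_cast h4

/-- The numerical estimate needed after the union bound, with `t = s + 2`. -/
lemma two_mul_choose_le (u x m k s : ℕ) (hu : 1 ≤ u) (hx : 1 ≤ x) (hk1 : 16 * x ^ 4 ≤ k)
    (hk2 : u ^ 3 ≤ k) (hk3 : 1728 ≤ k) (hm : m < (s + 2) * x) :
    2 * u * m.choose (s + 2) ≤ k ^ (s + 1) := by
  rcases s with _ | s
  · have hc : m.choose 2 ≤ 2 * x ^ 2 := by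
      rw [Nat.choose_two_right]
      apply Nat.div_le_of_le_mul
      have : m * (m - 1) ≤ (2 * x) * (2 * x) := Nat.mul_le_mul (by omega) (by omega)
      nlinarith
    have hsq : (4 * u * x ^ 2) ^ 2 ≤ k ^ 2 := by
      calc (4 * u * x ^ 2) ^ 2 = (16 * x ^ 4) * u ^ 2 := by ring
        _ ≤ (16 * x ^ 4) * u ^ 3 := by gcongr; omega
        _ ≤ k * k := by gcongr
        _ = k ^ 2 := by ring
    have h4 := (Nat.pow_le_pow_iff_left (by norm_num)).1 hsq
    simp only [zero_add, pow_one]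
    calc 2 * u * m.choose 2 ≤ 2 * u * (2 * x ^ 2) := by gcongr
      _ = 4 * u * x ^ 2 := by ring
      _ ≤ k := h4
  · have huk : u ≤ k := (Nat.le_self_pow (by norm_num) u).trans hk2
    have hcube : 54 * x ^ 3 ≤ k := by
      rcases le_or_gt x 3 with h | h
      · calc 54 * x ^ 3 ≤ 54 * 3 ^ 3 := by gcongr
          _ ≤ k := by omega
      · calc 54 * x ^ 3 ≤ 16 * (x * x ^ 3) := by nlinarith [Nat.zero_le (x ^ 3)]
          _ = 16 * x ^ 4 := by ring
          _ ≤ k := hk1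
    have hlin : 3 * x ≤ k := by
      have : x ≤ x ^ 3 := Nat.le_self_pow (by norm_num) x
      omega
    calc 2 * u * m.choose (s + 1 + 2) ≤ 2 * u * (3 * x) ^ (s + 1 + 2) := by
          gcongr; exact choose_le_three_mul_pow _ _ _ hm.le
      _ = u * (54 * x ^ 3) * (3 * x) ^ s := by ring
      _ ≤ k * k * k ^ s := by gcongr
      _ = k ^ (s + 1 + 1) := by ring

/-- There is an integer `N₀` such that for all positive integers `u`, `x` and `m`,
setting `k = max(16x⁴, u³, 8N₀³)`, a uniformly random assignment of `m` balls into
`k` bins has maximum load exceeding `max(1, m/x)` with probability at most `1/(2u)`. -/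
theorem stmt_10 :
    ∃ N₀ : ℕ, ∀ u x m : ℕ, 1 ≤ u → 1 ≤ x → 1 ≤ m →
      ((Finset.univ.filter fun f : Fin m → Fin (max (16 * x ^ 4) (max (u ^ 3) (8 * N₀ ^ 3))) =>
          max 1 ((m : ℝ) / x) < (maxLoad f : ℝ)).card : ℝ)
        / ((max (16 * x ^ 4) (max (u ^ 3) (8 * N₀ ^ 3)) : ℕ) : ℝ) ^ m ≤ 1 / (2 * (u : ℝ)) := by
  refine ⟨6, fun u x m hu hx _ => ?_⟩
  have hk1 : 16 * x ^ 4 ≤ max (16 * x ^ 4) (max (u ^ 3) (8 * 6 ^ 3)) := le_max_left _ _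
  have hk2 : u ^ 3 ≤ max (16 * x ^ 4) (max (u ^ 3) (8 * 6 ^ 3)) :=
    (le_max_left _ _).trans (le_max_right _ _)
  have hk3 : 1728 ≤ max (16 * x ^ 4) (max (u ^ 3) (8 * 6 ^ 3)) :=
    (le_max_right (u ^ 3) (8 * 6 ^ 3)).trans (le_max_right _ _)
  generalize max (16 * x ^ 4) (max (u ^ 3) (8 * 6 ^ 3)) = k at hk1 hk2 hk3 ⊢
  have hxR : (0 : ℝ) < x := by exact_mod_cast hx
  -- The threshold load is `t = s + 2`, with truncated subtraction covering `m / x = 0`.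
  set s := m / x - 1 with hs
  have hm : m < (s + 2) * x := by
    have h1 : m < (m / x + 1) * x := by
      rw [mul_comm]; exact Nat.lt_mul_div_succ m hx
    exact h1.trans_le (Nat.mul_le_mul_right _ (by omega))
  have hsub : (Finset.univ.filter fun f : Fin m → Fin k =>
      max 1 ((m : ℝ) / x) < (maxLoad f : ℝ)) ⊆
      Finset.univ.filter fun f : Fin m → Fin k => s + 2 ≤ maxLoad f := by
    intro f hf
    simp only [Finset.mem_filter, Finset.mem_univ, true_and, max_lt_iff] at hf ⊢
    obtain ⟨h1, h2⟩ := hf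
    have h1' : 1 < maxLoad f := by exact_mod_cast h1
    rw [div_lt_iff₀ hxR] at h2
    have h2' : m < maxLoad f * x := by exact_mod_cast h2
    have h3 := (Nat.div_lt_iff_lt_mul hx).2 h2'
    omega
  have hA := (Nat.mul_le_mul_right (k ^ (s + 2)) (Finset.card_le_card hsub)).trans
    (card_le_maxLoad m k (s + 2) (by omega))
  have hB := two_mul_choose_le u x m k s hu hx hk1 hk2 hk3 hm
  have hkpos : 0 < k := by omega
  generalize (Finset.univ.filter fun f : Fin m → Fin k =>
      max 1 ((m : ℝ) / x) < (maxLoad f : ℝ)).card = A at hA ⊢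
  have hfin : 2 * u * A ≤ k ^ m := by
    refine Nat.le_of_mul_le_mul_right (c := k ^ (s + 2)) ?_ (by positivity)
    calc 2 * u * A * k ^ (s + 2) = 2 * u * (A * k ^ (s + 2)) := by ring
      _ ≤ 2 * u * (k * m.choose (s + 2) * k ^ m) := by gcongr
      _ = 2 * u * m.choose (s + 2) * (k * k ^ m) := by ring
      _ ≤ k ^ (s + 1) * (k * k ^ m) := by gcongr
      _ = k ^ m * k ^ (s + 2) := by ring
  have hkR : (0 : ℝ) < k := by exact_mod_cast hkpos
  have huR : (0 : ℝ) < u := by exact_mod_cast hu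
  have hfinR : 2 * (u : ℝ) * A ≤ (k : ℝ) ^ m := by exact_mod_cast hfin
  rw [div_le_div_iff₀ (by positivity) (by positivity)]
  linarith
end
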